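/- arXiv:2103.09715 — 2 statements merged into one kernel-verified Lean document; each statement's English description precedes it below -/
import Mathlib

section
/- If a graph G admits a tree H-decomposition of width k and every graph in the class H has treewidth at most d, then the treewidth of G is at most d + k + 1. -/
/-- A class of graphs: a predicate on simple graphs over every vertex type. -/
def GraphClass : Type 1 := ∀ (V : Type), SimpleGraph V → Prop

/-- A tree decomposition of a graph `G`. -/
structure TreeDecomp {V : Type} (G : SimpleGraph V) (T : Type) (Tg : SimpleGraph T) : Type where
  bag : T → Set V
  isTree : Tg.Connected ∧ Tg.IsAcyclic
  bags_cover : ∀ v : V, ∃ t : T, v ∈ bag t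
  edges_covered : ∀ ⦃u v : V⦄, G.Adj u v → ∃ t : T, u ∈ bag t ∧ v ∈ bag t
  bags_connected : ∀ v : V, (Tg.induce {t : T | v ∈ bag t}).Connected

/-- A tree `H`-decomposition: a tree decomposition together with a set `base` of base vertices,
each of which occurs in a unique bag, which is a leaf bag, and such that for each node `t`
the graph induced on the base vertices of its bag belongs to `H`. -/
structure THDecomp (H : GraphClass) {V : Type} (G : SimpleGraph V) (T : Type)
    (Tg : SimpleGraph T) extends TreeDecomp G T Tg : Type where
  base : Set V
  base_unique : ∀ v ∈ base, ∃! t : T, v ∈ bag t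
  base_leaf : ∀ v ∈ base, ∀ t : T, v ∈ bag t → (Tg.neighborSet t).Subsingleton
  base_in_H : ∀ t : T, H _ (G.induce (bag t ∩ base))

/-!
Replace each node `t` of the tree `H`-decomposition by the tree of an optimal tree decomposition of
the graph induced on the base vertices of its bag, add the non-base vertices of the bag of `t` to
all bags of that tree, and join arbitrarily chosen roots of these trees along the edges of the
original tree. A non-base vertex then occupies the full trees over a connected set of nodes, and a
base vertex a connected part of a single one, so this is a tree decomposition; its bags have at
most `(k + 1) + (d + 1)` vertices.
-/

section Contraction

variable {V W : Type*} {G : SimpleGraph V} {G' : SimpleGraph W}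

theorem connected_induce_image (f : G →g G') {s : Set V} (hs : (G.induce s).Connected) :
    (G'.induce (f '' s)).Connected :=
  hs.map (SimpleGraph.induceHom f (Set.mapsTo_image f s)) (Set.surjective_mapsTo_image_restrict f s)

theorem reachable_of_forall_adj_reachable (f : V → W)
    (hf : ∀ ⦃x y⦄, G.Adj x y → G'.Reachable (f x) (f y)) {x y : V} (hxy : G.Reachable x y) :
    G'.Reachable (f x) (f y) := by
  simp only [SimpleGraph.reachable_iff_reflTransGen] at hf hxy ⊢
  exact Relation.ReflTransGen.lift' f hf _ _ hxy

theorem isBridge_of_isBridge_contraction (f : V → W) {a b : V}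
    (hf : ∀ ⦃x y⦄, G.Adj x y → s(x, y) ≠ s(a, b) →
      f x = f y ∨ G'.Adj (f x) (f y) ∧ s(f x, f y) ≠ s(f a, f b))
    (hbridge : G'.IsBridge s(f a, f b)) : G.IsBridge s(a, b) := by
  rw [SimpleGraph.isBridge_iff] at hbridge ⊢
  refine fun hab => hbridge (reachable_of_forall_adj_reachable f (fun x y hxy => ?_) hab)
  obtain ⟨hadj, hne⟩ := SimpleGraph.deleteEdges_adj.1 hxy
  obtain heq | hadj' := hf hadj hne
  · rw [heq]
  · exact (SimpleGraph.deleteEdges_adj.2 hadj').reachable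

end Contraction

section RootedSum

variable {T : Type*} {S : T → Type*}

/-- The graph obtained from a family of graphs `Sg t` with roots `r t`, indexed by the vertices of
`Tg`, by taking their disjoint union and joining the roots according to `Tg`. It is a tree if `Tg`
and all `Sg t` are trees, and serves as the tree of a refined tree decomposition. -/
def rootedSum (Tg : SimpleGraph T) (Sg : ∀ t, SimpleGraph (S t)) (r : ∀ t, S t) :
    SimpleGraph (Σ t, S t) :=
  (⨆ t, (Sg t).map (Sigma.mk t)) ⊔ Tg.map fun t => ⟨t, r t⟩

namespace rootedSum

variable {Tg : SimpleGraph T} {Sg : ∀ t, SimpleGraph (S t)} {r : ∀ t, S t}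

theorem adj_iff {x y : Σ t, S t} :
    (rootedSum Tg Sg r).Adj x y ↔
      (∃ t a b, (Sg t).Adj a b ∧ ⟨t, a⟩ = x ∧ ⟨t, b⟩ = y) ∨
        ∃ t u, Tg.Adj t u ∧ ⟨t, r t⟩ = x ∧ ⟨u, r u⟩ = y := by
  have fiber (t : T) := SimpleGraph.map_adj (.sigmaMk t) (Sg t) x y
  have root := SimpleGraph.map_adj ⟨fun t => (⟨t, r t⟩ : Σ t, S t),
    fun _ _ h => congrArg Sigma.fst h⟩ Tg x y
  exact or_congr (SimpleGraph.iSup_adj.trans (exists_congr fiber)) root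

/-- The inclusion of the fibre over `t`. -/
def fiberHom (t : T) : Sg t →g rootedSum Tg Sg r where
  toFun := Sigma.mk t
  map_rel' h := adj_iff.2 (.inl ⟨t, _, _, h, rfl, rfl⟩)

/-- The inclusion of `Tg` as the graph spanned by the roots. -/
def rootHom : Tg →g rootedSum Tg Sg r where
  toFun t := ⟨t, r t⟩
  map_rel' h := adj_iff.2 (.inr ⟨_, _, h, rfl, rfl⟩)

theorem connected_induce_fst_preimage (hS : ∀ t, (Sg t).Connected) {A : Set T}
    (hA : (Tg.induce A).Connected) :
    ((rootedSum Tg Sg r).induce (Sigma.fst ⁻¹' A)).Connected := by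
  let toRoots : Tg.induce A →g (rootedSum Tg Sg r).induce (Sigma.fst ⁻¹' A) :=
    SimpleGraph.induceHom rootHom fun _ ht => ht
  let toFiber (t : A) : Sg t →g (rootedSum Tg Sg r).induce (Sigma.fst ⁻¹' A) :=
    ⟨fun a => ⟨⟨t, a⟩, t.2⟩, (fiberHom t.1).map_adj⟩
  have reachable_root (x : Σ t, S t) (hx : x.1 ∈ A) :
      ((rootedSum Tg Sg r).induce (Sigma.fst ⁻¹' A)).Reachable ⟨x, hx⟩ (toRoots ⟨x.1, hx⟩) :=
    ((hS x.1).preconnected x.2 (r x.1)).map (toFiber ⟨x.1, hx⟩)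
  refine { preconnected := ?_, nonempty := hA.nonempty.map toRoots }
  rintro ⟨x, hx⟩ ⟨y, hy⟩
  have roots_reachable := (hA.preconnected ⟨x.1, hx⟩ ⟨y.1, hy⟩).map toRoots
  exact (reachable_root x hx).trans (roots_reachable.trans (reachable_root y hy).symm)

theorem connected (hT : Tg.Connected) (hS : ∀ t, (Sg t).Connected) :
    (rootedSum Tg Sg r).Connected :=
  (SimpleGraph.induceUnivIso _).connected_iff.1 <|
    connected_induce_fst_preimage hS ((SimpleGraph.induceUnivIso Tg).connected_iff.2 hT)

theorem isBridge_root {t u : T} (h : Tg.IsBridge s(t, u)) :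
    (rootedSum Tg Sg r).IsBridge s(⟨t, r t⟩, ⟨u, r u⟩) := by
  refine isBridge_of_isBridge_contraction Sigma.fst (fun x y hxy hne => ?_) h
  obtain ⟨v, a, b, -, rfl, rfl⟩ | ⟨v, w, hvw, rfl, rfl⟩ := adj_iff.1 hxy
  · exact .inl rfl
  · exact .inr ⟨hvw, fun heq => hne (congrArg (Sym2.map fun t => (⟨t, r t⟩ : Σ t, S t)) heq)⟩

theorem isBridge_fiber {t : T} {a b : S t} (h : (Sg t).IsBridge s(a, b)) :
    (rootedSum Tg Sg r).IsBridge s(⟨t, a⟩, ⟨t, b⟩) := by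
  -- Sending every other fibre to the root contracts all edges outside the fibre over `t`.
  let collapse : (Σ t, S t) → S t := Function.extend (Sigma.mk t) id fun _ => r t
  have collapse_fiber (c : S t) : collapse ⟨t, c⟩ = c :=
    sigma_mk_injective.extend_apply id _ c
  have collapse_of_ne {u : T} (hu : u ≠ t) (c : S u) : collapse ⟨u, c⟩ = r t :=
    Function.extend_apply' _ _ _ fun ⟨_, heq⟩ => hu (congrArg Sigma.fst heq).symm
  have collapse_root (u : T) : collapse ⟨u, r u⟩ = r t := by
    obtain rfl | hu := eq_or_ne u t
    · exact collapse_fiber _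
    · exact collapse_of_ne hu _
  refine isBridge_of_isBridge_contraction collapse (fun x y hxy hne => ?_)
    (by rwa [collapse_fiber, collapse_fiber])
  obtain ⟨u, c, d, hcd, rfl, rfl⟩ | ⟨u, v, -, rfl, rfl⟩ := adj_iff.1 hxy
  · obtain rfl | hu := eq_or_ne u t
    · simp only [collapse_fiber]
      exact .inr ⟨hcd, fun heq => hne (congrArg (Sym2.map (Sigma.mk u)) heq)⟩
    · exact .inl ((collapse_of_ne hu c).trans (collapse_of_ne hu d).symm)
  · exact .inl ((collapse_root u).trans (collapse_root v).symm)

theorem isAcyclic (hT : Tg.IsAcyclic) (hS : ∀ t, (Sg t).IsAcyclic) :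
    (rootedSum Tg Sg r).IsAcyclic := by
  rw [SimpleGraph.isAcyclic_iff_forall_adj_isBridge]
  intro x y hxy
  obtain ⟨t, a, b, hab, rfl, rfl⟩ | ⟨t, u, htu, rfl, rfl⟩ := adj_iff.1 hxy
  · exact isBridge_fiber (SimpleGraph.isAcyclic_iff_forall_adj_isBridge.1 (hS t) hab)
  · exact isBridge_root (SimpleGraph.isAcyclic_iff_forall_adj_isBridge.1 hT htu)

end rootedSum

end RootedSum

namespace TreeDecomp

variable {V T : Type} {G : SimpleGraph V} {Tg : SimpleGraph T} {S : T → Type}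
  {Sg : ∀ t, SimpleGraph (S t)} {L : Set V}

/-- The bags of the tree decomposition `TreeDecomp.refine`: a bag of the decomposition of
`G[D.bag t ∩ L]`, together with all vertices of `D.bag t` outside `L`. -/
def refinedBag (D : TreeDecomp G T Tg) (E : ∀ t, TreeDecomp (G.induce (D.bag t ∩ L)) (S t) (Sg t))
    (x : Σ t, S t) : Set V :=
  D.bag x.1 \ L ∪ Subtype.val '' (E x.1).bag x.2

variable {D : TreeDecomp G T Tg} {E : ∀ t, TreeDecomp (G.induce (D.bag t ∩ L)) (S t) (Sg t)}
  {x : Σ t, S t} {t : T} {u v : V}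

theorem mem_refinedBag_of_notMem (hv : v ∉ L) : v ∈ D.refinedBag E x ↔ v ∈ D.bag x.1 := by
  simp [refinedBag, hv]

theorem mem_refinedBag_of_mem (hv : v ∈ L) :
    v ∈ D.refinedBag E x ↔ ∃ h : v ∈ D.bag x.1, ⟨v, h, hv⟩ ∈ (E x.1).bag x.2 := by
  simp [refinedBag, hv]

theorem exists_mem_refinedBag (E : ∀ t, TreeDecomp (G.induce (D.bag t ∩ L)) (S t) (Sg t))
    (hv : v ∈ D.bag t) : ∃ s, v ∈ D.refinedBag E ⟨t, s⟩ := by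
  by_cases hvL : v ∈ L
  · obtain ⟨s, hs⟩ := (E t).bags_cover ⟨v, hv, hvL⟩
    exact ⟨s, (mem_refinedBag_of_mem hvL).2 ⟨hv, hs⟩⟩
  · obtain ⟨s⟩ := (E t).isTree.1.nonempty
    exact ⟨s, (mem_refinedBag_of_notMem hvL).2 hv⟩

theorem exists_mem_refinedBag_of_adj
    (E : ∀ t, TreeDecomp (G.induce (D.bag t ∩ L)) (S t) (Sg t)) (huv : G.Adj u v)
    (hu : u ∈ D.bag t) (hv : v ∈ D.bag t) :
    ∃ s, u ∈ D.refinedBag E ⟨t, s⟩ ∧ v ∈ D.refinedBag E ⟨t, s⟩ := by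
  by_cases huL : u ∈ L
  · by_cases hvL : v ∈ L
    · obtain ⟨s, hus, hvs⟩ := (E t).edges_covered (u := ⟨u, hu, huL⟩) (v := ⟨v, hv, hvL⟩) huv
      exact ⟨s, (mem_refinedBag_of_mem huL).2 ⟨hu, hus⟩, (mem_refinedBag_of_mem hvL).2 ⟨hv, hvs⟩⟩
    · obtain ⟨s, hs⟩ := exists_mem_refinedBag E hu
      exact ⟨s, hs, (mem_refinedBag_of_notMem hvL).2 hv⟩
  · obtain ⟨s, hs⟩ := exists_mem_refinedBag E hv
    exact ⟨s, (mem_refinedBag_of_notMem huL).2 hu, hs⟩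

theorem connected_refinedBag_of_notMem (r : ∀ t, S t) (hv : v ∉ L) :
    ((rootedSum Tg Sg r).induce {x | v ∈ D.refinedBag E x}).Connected := by
  have hnodes : {x | v ∈ D.refinedBag E x} = Sigma.fst ⁻¹' {t | v ∈ D.bag t} :=
    Set.ext fun _ => mem_refinedBag_of_notMem hv
  rw [hnodes]
  exact rootedSum.connected_induce_fst_preimage (fun t => (E t).isTree.1) (D.bags_connected v)

theorem connected_refinedBag_of_mem (r : ∀ t, S t) (hv : v ∈ L) (hunique : ∃! t, v ∈ D.bag t) :
    ((rootedSum Tg Sg r).induce {x | v ∈ D.refinedBag E x}).Connected := by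
  obtain ⟨t, ht, hunique⟩ := hunique
  have hnodes : {x | v ∈ D.refinedBag E x} = Sigma.mk t '' {s | ⟨v, ht, hv⟩ ∈ (E t).bag s} := by
    ext ⟨u, s⟩
    simp only [Set.mem_ofPred_eq, mem_refinedBag_of_mem hv, Set.mem_image]
    constructor
    · rintro ⟨hu, hs⟩
      obtain rfl := hunique u hu
      exact ⟨s, hs, rfl⟩
    · rintro ⟨s, hs, ⟨⟩⟩
      exact ⟨ht, hs⟩
  rw [hnodes]
  exact connected_induce_image (rootedSum.fiberHom t) ((E t).bags_connected ⟨v, ht, hv⟩)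

/-- The tree decomposition of `G` obtained from a tree decomposition `D` by replacing each node `t`
with the tree of a decomposition of `G[D.bag t ∩ L]`, where each vertex of `L` lies in a single bag
of `D`. The roots `r t`, at which these trees are attached to each other, are arbitrary. -/
def refine (D : TreeDecomp G T Tg) (hL : ∀ v ∈ L, ∃! t, v ∈ D.bag t)
    (E : ∀ t, TreeDecomp (G.induce (D.bag t ∩ L)) (S t) (Sg t)) (r : ∀ t, S t) :
    TreeDecomp G (Σ t, S t) (rootedSum Tg Sg r) where
  bag := D.refinedBag E
  isTree := ⟨rootedSum.connected D.isTree.1 fun t => (E t).isTree.1,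
    rootedSum.isAcyclic D.isTree.2 fun t => (E t).isTree.2⟩
  bags_cover v := by
    obtain ⟨t, ht⟩ := D.bags_cover v
    obtain ⟨s, hs⟩ := exists_mem_refinedBag E ht
    exact ⟨⟨t, s⟩, hs⟩
  edges_covered u v huv := by
    obtain ⟨t, hu, hv⟩ := D.edges_covered huv
    obtain ⟨s, hs⟩ := exists_mem_refinedBag_of_adj E huv hu hv
    exact ⟨⟨t, s⟩, hs⟩
  bags_connected v := by
    by_cases hv : v ∈ L
    · exact connected_refinedBag_of_mem r hv (hL v hv)
    · exact connected_refinedBag_of_notMem r hv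

theorem encard_refinedBag_le :
    (D.refinedBag E x).encard ≤ (D.bag x.1 \ L).encard + ((E x.1).bag x.2).encard := by
  rw [← Subtype.val_injective.encard_image ((E x.1).bag x.2)]
  exact Set.encard_union_le _ _

end TreeDecomp

/-- The graph `G` has treewidth at most `w`. Bags are measured by `Set.encard`, since `Set.ncard`
assigns `0` to infinite sets. -/
def HasTreewidthLE {V : Type} (G : SimpleGraph V) (w : ℕ) : Prop :=
  ∃ (S : Type) (Sg : SimpleGraph S) (D : TreeDecomp G S Sg), ∀ s, (D.bag s).encard ≤ (w + 1 : ℕ)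

theorem hasTreewidthLE_iff_ncard_le {V : Type} [Finite V] {G : SimpleGraph V} {w : ℕ} :
    HasTreewidthLE G w ↔
      ∃ (S : Type) (Sg : SimpleGraph S) (D : TreeDecomp G S Sg), ∀ s, (D.bag s).ncard ≤ w + 1 := by
  simp only [HasTreewidthLE, Set.encard_le_coe_iff_finite_ncard_le, Set.toFinite, true_and]

theorem treewidth_le_of_tree_H_decomposition_general {V T : Type} {G : SimpleGraph V}
    {Tg : SimpleGraph T} (D : TreeDecomp G T Tg) {L : Set V} (hL : ∀ v ∈ L, ∃! t, v ∈ D.bag t)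
    {k d : ℕ} (hwidth : ∀ t, (D.bag t \ L).encard ≤ (k + 1 : ℕ))
    (hbase : ∀ t, HasTreewidthLE (G.induce (D.bag t ∩ L)) d) :
    HasTreewidthLE G (d + k + 1) := by
  choose S Sg E hE using hbase
  refine ⟨_, _, D.refine hL E fun t => (E t).isTree.1.nonempty.some, fun x => ?_⟩
  calc (D.refinedBag E x).encard
      ≤ (D.bag x.1 \ L).encard + ((E x.1).bag x.2).encard := TreeDecomp.encard_refinedBag_le
    _ ≤ (k + 1 : ℕ) + (d + 1 : ℕ) := add_le_add (hwidth x.1) (hE x.1 x.2)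
    _ = (d + k + 1 + 1 : ℕ) := by push_cast; ring

/-- If a graph `G` admits a tree `H`-decomposition of width `k` (every bag has at most `k + 1`
non-base vertices) and every graph in the class `H` has treewidth at most `d` (it admits a tree
decomposition with all bags of size at most `d + 1`), then the treewidth of `G` is at most
`d + k + 1`. -/
theorem treewidth_le_of_tree_H_decomposition (H : GraphClass)
    {V : Type} [Fintype V] (G : SimpleGraph V)
    (T : Type) (Tg : SimpleGraph T) (D : THDecomp H G T Tg) (k d : ℕ)
    (hwidth : ∀ t : T, (D.bag t \ D.base).ncard ≤ k + 1)
    (hH : ∀ (α : Type) [Fintype α] (G' : SimpleGraph α), H α G' →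
      ∃ (S : Type) (Sg : SimpleGraph S) (D' : TreeDecomp G' S Sg),
        ∀ s : S, (D'.bag s).ncard ≤ d + 1) :
    ∃ (S : Type) (Sg : SimpleGraph S) (D' : TreeDecomp G S Sg),
      ∀ s : S, (D'.bag s).ncard ≤ (d + k + 1) + 1 :=
  hasTreewidthLE_iff_ncard_le.1 <| treewidth_le_of_tree_H_decomposition_general D.toTreeDecomp
    D.base_unique (fun t => Set.encard_le_coe_iff_finite_ncard_le.2 ⟨Set.toFinite _, hwidth t⟩)
    fun t => hasTreewidthLE_iff_ncard_le.2 (@hH _ (Fintype.ofFinite _) _ (D.base_in_H t))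
end

section
/- Let G be a graph, let (A,X,B) be a tri-separation of G, and let M ⊆ B be a module of G. If G[X ∪ B] is an interval graph, then every obstruction in G contains at most one vertex of M; moreover, for every obstruction S intersecting M and every v ∈ M, the set (S \ M) ∪ {v} is also an obstruction. -/
/-- `G` is an interval graph: the vertices can be assigned closed intervals
`[lp v, rp v]` on the real line (with `lp v < rp v`) such that two distinct vertices
are adjacent if and only if their intervals intersect. -/
def IsIntervalGraph {α : Type} (G : SimpleGraph α) : Prop :=
  ∃ lp rp : α → ℝ, (∀ x : α, lp x < rp x) ∧
    ∀ u v : α, u ≠ v →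
      (G.Adj u v ↔ (Set.Icc (lp u) (rp u) ∩ Set.Icc (lp v) (rp v)).Nonempty)

/-- An obstruction in `G`: an inclusion-minimal vertex set `S` such that `G[S]` is not an
interval graph. -/
def IsObstruction {α : Type} (G : SimpleGraph α) (S : Set α) : Prop :=
  ¬ IsIntervalGraph (G.induce S) ∧ ∀ S' : Set α, S' ⊂ S → IsIntervalGraph (G.induce S')

/-- `M` is a module of `G`: all vertices of `M` have the same neighborhood outside `M`. -/
def IsModule {α : Type} (G : SimpleGraph α) (M : Set α) : Prop :=
  ∀ u ∈ M, ∀ v ∈ M, ∀ w : α, w ∉ M → (G.Adj u w ↔ G.Adj v w)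

/-!
A module `M` of a non-interval graph `G[S]` is reduced to a single vertex `m` in two ways.

If `S ∩ M` is a clique, all its vertices can share the interval of `m`. Otherwise `M` contains two
distinct nonadjacent vertices `x` and `y`. Every neighbor of `m` outside `M` is a common neighbor of
`x` and `y`, so these neighbors form a clique, for else `x` and `y` would lie on an induced
four-cycle of `G[X ∪ B]`, which contains `M` and all its neighbors. By the Helly property the
intervals of this clique and of `m` share a point `p`, and a model of `G[S ∩ M]` fits into a gap
opened at `p`.

In both cases `G[S]` is an interval graph as soon as `G[(S \ M) ∪ {m}]` is, so an obstruction cannot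
contain a second vertex of `M`. Exchanging its only vertex in `M` is an instance of the first case.
-/

/-- The functions `l` and `r` give the endpoints of an interval model of `G[S]`. They are defined on
all vertices, with arbitrary values outside `S`, so that models of different induced subgraphs can
be combined without subtypes. -/
structure IsIntervalModel {α : Type*} (G : SimpleGraph α) (S : Set α) (l r : α → ℝ) : Prop where
  lt : ∀ x ∈ S, l x < r x
  adj_iff : ∀ ⦃x⦄, x ∈ S → ∀ ⦃y⦄, y ∈ S → x ≠ y →
    (G.Adj x y ↔ l x ≤ r y ∧ l y ≤ r x)

/-- The left endpoint `t` after the line has been cut at `p` and the two sides moved one unit apart.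
An interval containing `p` grows to contain `[p - 1, p + 1]`. -/
noncomputable def widenLeft (p t : ℝ) : ℝ := if t ≤ p then t - 1 else t + 1

/-- The counterpart of `widenLeft` for right endpoints. The two maps differ only at `p`. -/
noncomputable def widenRight (p t : ℝ) : ℝ := if t < p then t - 1 else t + 1

section Widen

variable {p s t : ℝ}

theorem widenLeft_le_widenRight_iff : widenLeft p s ≤ widenRight p t ↔ s ≤ t := by
  unfold widenLeft widenRight
  split_ifs <;> constructor <;> intro <;> linarith

theorem widenLeft_lt_widenRight (h : s < t) : widenLeft p s < widenRight p t := by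
  unfold widenLeft widenRight
  split_ifs <;> linarith

theorem widenLeft_le_iff (ht : t ∈ Set.Ioo (p - 1) (p + 1)) : widenLeft p s ≤ t ↔ s ≤ p := by
  obtain ⟨hpt, htp⟩ := ht
  unfold widenLeft
  split_ifs <;> constructor <;> intro <;> linarith

theorem le_widenRight_iff (ht : t ∈ Set.Ioo (p - 1) (p + 1)) : t ≤ widenRight p s ↔ p ≤ s := by
  obtain ⟨hpt, htp⟩ := ht
  unfold widenRight
  split_ifs <;> constructor <;> intro <;> linarith

theorem exists_strictMono_forall_mem_Ioo (p : ℝ) :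
    ∃ φ : ℝ → ℝ, StrictMono φ ∧ ∀ t, φ t ∈ Set.Ioo (p - 1) (p + 1) := by
  let e := orderIsoIooNegOneOne ℝ
  have he : StrictMono fun t => (e t : ℝ) := fun _ _ hst => Subtype.coe_lt_coe.2 (e.strictMono hst)
  refine ⟨fun t => p + e t, he.const_add p, fun t => ?_⟩
  obtain ⟨hl, hr⟩ := (e t).2
  exact ⟨by linarith, by linarith⟩

end Widen

theorem Icc_inter_Icc_nonempty_iff {R : Type*} [LinearOrder R] {a b c d : R} (hab : a ≤ b)
    (hcd : c ≤ d) : (Set.Icc a b ∩ Set.Icc c d).Nonempty ↔ a ≤ d ∧ c ≤ b := by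
  rw [Set.Icc_inter_Icc, Set.nonempty_Icc, sup_le_iff, le_inf_iff, le_inf_iff]
  tauto

theorem isIntervalGraph_induce_iff {α : Type} {G : SimpleGraph α} {S : Set α} :
    IsIntervalGraph (G.induce S) ↔ ∃ l r, IsIntervalModel G S l r := by
  classical
  constructor
  · rintro ⟨l, r, hlr, hadj⟩
    refine ⟨fun x => if hx : x ∈ S then l ⟨x, hx⟩ else 0,
      fun x => if hx : x ∈ S then r ⟨x, hx⟩ else 0, fun x hx => by simp [hx, hlr],
      fun x hx y hy hxy => ?_⟩
    have hxy' := hadj ⟨x, hx⟩ ⟨y, hy⟩ (by simpa using hxy)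
    rw [Icc_inter_Icc_nonempty_iff (hlr _).le (hlr _).le] at hxy'
    simpa [hx, hy] using hxy'
  · rintro ⟨l, r, h⟩
    refine ⟨fun x => l x, fun x => r x, fun x => h.lt x x.2, fun x y hxy => ?_⟩
    rw [Icc_inter_Icc_nonempty_iff (h.lt x x.2).le (h.lt y y.2).le]
    exact h.adj_iff x.2 y.2 (Subtype.coe_ne_coe.2 hxy)

namespace IsIntervalModel

variable {α β : Type*} {G : SimpleGraph α} {S T K M : Set α} {l r : α → ℝ}

theorem mono (h : IsIntervalModel G T l r) (hST : S ⊆ T) : IsIntervalModel G S l r :=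
  ⟨fun x hx => h.lt x (hST hx), Set.Pairwise.mono hST h.adj_iff⟩

theorem strictMono_comp (h : IsIntervalModel G S l r) {φ : ℝ → ℝ} (hφ : StrictMono φ) :
    IsIntervalModel G S (φ ∘ l) (φ ∘ r) where
  lt x hx := hφ (h.lt x hx)
  adj_iff := by simpa only [Function.comp_apply, hφ.le_iff_le] using h.adj_iff

/-- The vertices in a fiber of `f` form a clique and share one interval. -/
theorem comp_of_adj_iff {H : SimpleGraph β} {S : Set β} {f : β → α} (h : IsIntervalModel G T l r)
    (hf : Set.MapsTo f S T)
    (hadj : S.Pairwise fun x y => H.Adj x y ↔ f x = f y ∨ G.Adj (f x) (f y)) :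
    IsIntervalModel H S (l ∘ f) (r ∘ f) where
  lt x hx := h.lt _ (hf hx)
  adj_iff x hx y hy hxy := by
    refine (hadj hx hy hxy).trans ?_
    by_cases hfxy : f x = f y
    · simp [hfxy, (h.lt _ (hf hy)).le]
    · simpa [hfxy] using h.adj_iff (hf hx) (hf hy) hfxy

theorem isClique_inter_commonNeighbors (h : IsIntervalModel G S l r) {x y : α} (hx : x ∈ S)
    (hy : y ∈ S) (hxy : x ≠ y) (hnadj : ¬ G.Adj x y) :
    G.IsClique (S ∩ G.commonNeighbors x y) := by
  rintro c ⟨hc, hxc, hyc⟩ d ⟨hd, hxd, hyd⟩ hcd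
  rw [G.mem_neighborSet] at hxc hyc hxd hyd
  rw [h.adj_iff hx hy hxy, not_and_or, not_le, not_le] at hnadj
  rw [h.adj_iff hx hc hxc.ne] at hxc
  rw [h.adj_iff hy hc hyc.ne] at hyc
  rw [h.adj_iff hx hd hxd.ne] at hxd
  rw [h.adj_iff hy hd hyd.ne] at hyd
  rw [h.adj_iff hc hd hcd]
  -- The gap between the intervals of `x` and `y` is covered by those of `c` and `d`.
  rcases hnadj with hlt | hlt <;> constructor <;> linarith

theorem exists_mem_Icc_of_isClique (h : IsIntervalModel G S l r) (hKS : K ⊆ S)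
    (hK : G.IsClique K) : ∃ p, ∀ x ∈ K, p ∈ Set.Icc (l x) (r x) := by
  rcases K.eq_empty_or_nonempty with rfl | hne
  · simp
  have hle : ∀ x ∈ K, ∀ y ∈ K, l x ≤ r y := fun x hx y hy => by
    rcases eq_or_ne x y with rfl | hxy
    · exact (h.lt x (hKS hx)).le
    · exact ((h.adj_iff (hKS hx) (hKS hy) hxy).1 (hK hx hy hxy)).1
  obtain ⟨p, hpl, hpr⟩ := exists_between_of_forall_le (hne.image l) (hne.image r)
    (Set.forall_mem_image.2 fun x hx => Set.forall_mem_image.2 (hle x hx))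
  exact ⟨p, fun x hx => ⟨hpl (Set.mem_image_of_mem l hx), hpr (Set.mem_image_of_mem r hx)⟩⟩

theorem exists_forall_adj_iff_mem_Icc (h : IsIntervalModel G S l r) {m : α} (hm : m ∈ S)
    (hclique : G.IsClique (S ∩ G.neighborSet m)) :
    ∃ p, ∀ x ∈ S, x ≠ m → (G.Adj m x ↔ p ∈ Set.Icc (l x) (r x)) := by
  obtain ⟨p, hp⟩ := h.exists_mem_Icc_of_isClique
    (Set.insert_subset hm Set.inter_subset_left) (hclique.insert fun _ hx _ => hx.2)
  have hpm := hp m (Set.mem_insert m _)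
  refine ⟨p, fun x hx hxm => ⟨fun hmx => hp x (Or.inr ⟨hx, hmx⟩), fun hpx => ?_⟩⟩
  exact (h.adj_iff hm hx hxm.symm).2 ⟨hpm.1.trans hpx.2, hpx.1.trans hpm.2⟩

open Classical in
theorem piecewise_widen {l' r' : α → ℝ} {p : ℝ} (hM : IsIntervalModel G (S ∩ M) l' r')
    (hl' : ∀ x ∈ S ∩ M, l' x ∈ Set.Ioo (p - 1) (p + 1))
    (hr' : ∀ x ∈ S ∩ M, r' x ∈ Set.Ioo (p - 1) (p + 1))
    (h : IsIntervalModel G (S \ M) l r)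
    (hp : ∀ x ∈ S ∩ M, ∀ y ∈ S \ M, (G.Adj x y ↔ p ∈ Set.Icc (l y) (r y))) :
    IsIntervalModel G S (M.piecewise l' (widenLeft p ∘ l)) (M.piecewise r' (widenRight p ∘ r)) where
  lt x hx := by
    by_cases hxM : x ∈ M
    · simpa [hxM] using hM.lt x ⟨hx, hxM⟩
    · simpa [hxM] using widenLeft_lt_widenRight (h.lt x ⟨hx, hxM⟩)
  adj_iff x hx y hy hxy := by
    by_cases hxM : x ∈ M <;> by_cases hyM : y ∈ M
    · simpa [hxM, hyM] using hM.adj_iff ⟨hx, hxM⟩ ⟨hy, hyM⟩ hxy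
    · simp [hxM, hyM, hp x ⟨hx, hxM⟩ y ⟨hy, hyM⟩, widenLeft_le_iff (hr' x ⟨hx, hxM⟩),
        le_widenRight_iff (hl' x ⟨hx, hxM⟩), and_comm]
    · simp [hxM, hyM, G.adj_comm x y, hp y ⟨hy, hyM⟩ x ⟨hx, hxM⟩,
        widenLeft_le_iff (hr' y ⟨hy, hyM⟩), le_widenRight_iff (hl' y ⟨hy, hyM⟩)]
    · simpa [hxM, hyM, widenLeft_le_widenRight_iff] using h.adj_iff ⟨hx, hxM⟩ ⟨hy, hyM⟩ hxy

end IsIntervalModel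

section Module

variable {α : Type} {G : SimpleGraph α} {S T M U : Set α} {m v : α}

theorem IsIntervalGraph.induce_mono (h : IsIntervalGraph (G.induce T)) (hST : S ⊆ T) :
    IsIntervalGraph (G.induce S) := by
  obtain ⟨l, r, hlr⟩ := isIntervalGraph_induce_iff.1 h
  exact isIntervalGraph_induce_iff.2 ⟨l, r, hlr.mono hST⟩

theorem isObstruction_iff_forall_sdiff_singleton :
    IsObstruction G S ↔
      ¬ IsIntervalGraph (G.induce S) ∧ ∀ x ∈ S, IsIntervalGraph (G.induce (S \ {x})) := by
  refine and_congr_right fun _ => ⟨fun h x hx => h _ (Set.sdiff_singleton_ssubset.2 hx),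
    fun h T hT => ?_⟩
  obtain ⟨x, hx, hTx⟩ := Set.ssubset_iff_sdiff_singleton.1 hT
  exact (h x hx).induce_mono hTx

theorem IsModule.isIntervalGraph_induce_of_isClique_inter (hmod : IsModule G M) (hv : v ∈ M)
    (hclique : G.IsClique (S ∩ M)) (h : IsIntervalGraph (G.induce ((S \ M) ∪ {v}))) :
    IsIntervalGraph (G.induce S) := by
  classical
  obtain ⟨l, r, hlr⟩ := isIntervalGraph_induce_iff.1 h
  let f : α → α := M.piecewise (fun _ => v) id
  have hf : Set.MapsTo f S ((S \ M) ∪ {v}) := fun x hx => by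
    by_cases hxM : x ∈ M <;> simp [f, hxM, hx]
  refine isIntervalGraph_induce_iff.2 ⟨_, _, hlr.comp_of_adj_iff hf fun x hx y hy hxy => ?_⟩
  by_cases hxM : x ∈ M <;> by_cases hyM : y ∈ M
  · simpa [f, hxM, hyM] using hclique ⟨hx, hxM⟩ ⟨hy, hyM⟩ hxy
  · have hvy : v ≠ y := ne_of_mem_of_not_mem hv hyM
    simpa [f, hxM, hyM, hvy] using hmod x hxM v hv y hyM
  · have hxv : x ≠ v := (ne_of_mem_of_not_mem hv hxM).symm
    simpa [f, hxM, hyM, hxv, G.adj_comm x] using hmod y hyM v hv x hxM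
  · simp [f, hxM, hyM, hxy]

theorem IsModule.isIntervalGraph_induce_of_isClique_neighborSet (hmod : IsModule G M) (hm : m ∈ M)
    (hclique : G.IsClique ((S \ M) ∩ G.neighborSet m)) (hM : IsIntervalGraph (G.induce (S ∩ M)))
    (h : IsIntervalGraph (G.induce ((S \ M) ∪ {m}))) : IsIntervalGraph (G.induce S) := by
  obtain ⟨l, r, hlr⟩ := isIntervalGraph_induce_iff.1 h
  obtain ⟨l', r', hlr'⟩ := isIntervalGraph_induce_iff.1 hM
  have hnbr : ((S \ M) ∪ {m}) ∩ G.neighborSet m ⊆ (S \ M) ∩ G.neighborSet m := by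
    rintro x ⟨hx | rfl, hmx⟩
    · exact ⟨hx, hmx⟩
    · exact absurd hmx (G.loopless.irrefl x)
  obtain ⟨p, hp⟩ := hlr.exists_forall_adj_iff_mem_Icc (Or.inr rfl) (hclique.subset hnbr)
  obtain ⟨φ, hφ, hφp⟩ := exists_strictMono_forall_mem_Ioo p
  have hmixed : ∀ x ∈ S ∩ M, ∀ y ∈ S \ M, (G.Adj x y ↔ p ∈ Set.Icc (l y) (r y)) :=
    fun x hx y hy => (hmod x hx.2 m hm y hy.2).trans
      (hp y (Or.inl hy) (ne_of_mem_of_not_mem hm hy.2).symm)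
  exact isIntervalGraph_induce_iff.2 ⟨_, _, (hlr'.strictMono_comp hφ).piecewise_widen
    (fun x _ => hφp (l' x)) (fun x _ => hφp (r' x)) (hlr.mono Set.subset_union_left) hmixed⟩

theorem IsModule.isClique_neighborSet_sdiff (hmod : IsModule G M) (hMU : M ⊆ U)
    (hNU : ∀ x ∈ M, G.neighborSet x ⊆ U) (hU : IsIntervalGraph (G.induce U))
    (hM : ¬ G.IsClique M) (hm : m ∈ M) : G.IsClique (G.neighborSet m \ M) := by
  obtain ⟨l, r, hlr⟩ := isIntervalGraph_induce_iff.1 hU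
  obtain ⟨x, hx, y, hy, hxy, hnadj⟩ : ∃ x ∈ M, ∃ y ∈ M, x ≠ y ∧ ¬ G.Adj x y := by
    simpa [SimpleGraph.IsClique, Set.Pairwise] using hM
  refine (hlr.isClique_inter_commonNeighbors (hMU hx) (hMU hy) hxy hnadj).subset fun c hc => ?_
  exact ⟨hNU m hm hc.1, (hmod x hx m hm c hc.2).2 hc.1, (hmod y hy m hm c hc.2).2 hc.1⟩

theorem IsObstruction.subsingleton_inter (hS : IsObstruction G S) (hmod : IsModule G M)
    (hMU : M ⊆ U) (hNU : ∀ x ∈ M, G.neighborSet x ⊆ U) (hU : IsIntervalGraph (G.induce U)) :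
    (S ∩ M).Subsingleton := by
  obtain ⟨hnot, hdel⟩ := isObstruction_iff_forall_sdiff_singleton.1 hS
  intro m hm m' hm'
  by_contra hne
  have hsub : (S \ M) ∪ {m} ⊆ S \ {m'} := by
    rintro x (hx | rfl)
    · exact ⟨hx.1, (ne_of_mem_of_not_mem hm'.2 hx.2).symm⟩
    · exact ⟨hm.1, hne⟩
  have hcontract := (hdel m' hm'.1).induce_mono hsub
  by_cases hclique : G.IsClique (S ∩ M)
  · exact hnot (hmod.isIntervalGraph_induce_of_isClique_inter hm.2 hclique hcontract)
  · have hM : ¬ G.IsClique M := fun h => hclique (h.subset Set.inter_subset_right)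
    have hsub_nbr : (S \ M) ∩ G.neighborSet m ⊆ G.neighborSet m \ M := fun x hx =>
      ⟨hx.2, hx.1.2⟩
    have hnbr := (hmod.isClique_neighborSet_sdiff hMU hNU hU hM hm.2).subset hsub_nbr
    exact hnot (hmod.isIntervalGraph_induce_of_isClique_neighborSet hm.2 hnbr
      (hU.induce_mono (Set.inter_subset_right.trans hMU)) hcontract)

theorem IsObstruction.sdiff_union_singleton (hS : IsObstruction G S) (hmod : IsModule G M)
    (hSM : (S ∩ M).Subsingleton) (hne : (S ∩ M).Nonempty) (hv : v ∈ M) :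
    IsObstruction G ((S \ M) ∪ {v}) := by
  obtain ⟨m, hm⟩ := hne
  obtain ⟨hnot, hdel⟩ := isObstruction_iff_forall_sdiff_singleton.1 hS
  refine isObstruction_iff_forall_sdiff_singleton.2 ⟨fun h => hnot ?_, fun x hx => ?_⟩
  · exact hmod.isIntervalGraph_induce_of_isClique_inter hv (.of_subsingleton hSM) h
  rcases eq_or_ne x v with rfl | hxv
  · refine (hdel m hm.1).induce_mono ?_
    rintro y ⟨hy | hy, hyx⟩
    · exact ⟨hy.1, (ne_of_mem_of_not_mem hm.2 hy.2).symm⟩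
    · exact absurd hy hyx
  · have hxSM : x ∈ S \ M := hx.resolve_right hxv
    have hsingle : (((S \ M) ∪ {v}) \ {x} ∩ M).Subsingleton :=
      Set.subsingleton_singleton.anti fun y hy => hy.1.1.resolve_left fun h => h.2 hy.2
    have hsub : ((((S \ M) ∪ {v}) \ {x}) \ M) ∪ {m} ⊆ S \ {x} := by
      rintro y (⟨⟨hy | rfl, hyx⟩, hyM⟩ | rfl)
      · exact ⟨hy.1, hyx⟩
      · exact absurd hv hyM
      · exact ⟨hm.1, ne_of_mem_of_not_mem hm.2 hxSM.2⟩
    exact hmod.isIntervalGraph_induce_of_isClique_inter hm.2 (.of_subsingleton hsingle)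
      ((hdel x hxSM.1).induce_mono hsub)

end Module

theorem neighborSet_subset_of_separation {V : Type*} {G : SimpleGraph V} {A X B : Set V}
    (hcover : A ∪ X ∪ B = Set.univ) (hsep : ∀ a ∈ A, ∀ b ∈ B, ¬ G.Adj a b) {b : V} (hb : b ∈ B) :
    G.neighborSet b ⊆ X ∪ B := fun c hbc => by
  have hc : c ∈ A ∪ (X ∪ B) := by rw [← Set.union_assoc, hcover]; trivial
  exact hc.resolve_left fun hcA => hsep c hcA b hb hbc.symm

theorem obstruction_meets_module_in_le_one_general {α : Type} (G : SimpleGraph α) (M U : Set α)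
    (hmod : IsModule G M) (hMU : M ⊆ U) (hNU : ∀ x ∈ M, G.neighborSet x ⊆ U)
    (hU : IsIntervalGraph (G.induce U)) :
    (∀ S : Set α, IsObstruction G S → (S ∩ M).Subsingleton) ∧
    (∀ S : Set α, IsObstruction G S → (S ∩ M).Nonempty →
      ∀ v ∈ M, IsObstruction G ((S \ M) ∪ {v})) := by
  have hsub : ∀ S : Set α, IsObstruction G S → (S ∩ M).Subsingleton := fun S hS =>
    hS.subsingleton_inter hmod hMU hNU hU
  exact ⟨hsub, fun S hS hne v hv => hS.sdiff_union_singleton hmod (hsub S hS) hne hv⟩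

/-- Let `(A, X, B)` be a tri-separation of `G` and let `M ⊆ B` be a module of `G`.
If `G[X ∪ B]` is an interval graph, then every obstruction in `G` contains at most one
vertex of `M`; moreover, for every obstruction `S` intersecting `M` and every `v ∈ M`,
the set `(S \ M) ∪ {v}` is also an obstruction. -/
theorem obstruction_meets_module_in_le_one {α : Type} [Fintype α] (G : SimpleGraph α)
    (A X B : Set α)
    (hcover : A ∪ X ∪ B = Set.univ)
    (hAX : Disjoint A X) (hAB : Disjoint A B) (hXB : Disjoint X B)
    (hsep : ∀ a ∈ A, ∀ b ∈ B, ¬ G.Adj a b)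
    (M : Set α) (hMB : M ⊆ B) (hmod : IsModule G M)
    (hint : IsIntervalGraph (G.induce (X ∪ B))) :
    (∀ S : Set α, IsObstruction G S → (S ∩ M).ncard ≤ 1) ∧
    (∀ S : Set α, IsObstruction G S → (S ∩ M).Nonempty →
      ∀ v ∈ M, IsObstruction G ((S \ M) ∪ {v})) := by
  obtain ⟨hsub, hexchange⟩ := obstruction_meets_module_in_le_one_general G M (X ∪ B) hmod
    (fun _ hx => Or.inr (hMB hx))
    (fun _ hx => neighborSet_subset_of_separation hcover hsep (hMB hx)) hint
  exact ⟨fun S hS => Set.ncard_le_one_iff_subsingleton.2 (hsub S hS), hexchange⟩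
end
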